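/- For all positive integers a < b, the complete bipartite graph K_{a,b} satisfies 1 + ⌈b/a⌉ ≤ š(K_{a,b}) ≤ 1 + b/gcd(a,b). -/

import Mathlib

open SimpleGraph Finset

/-- A proper edge coloring of `G` with colors in `ℕ`: distinct edges of `G`
sharing an endpoint receive distinct colors. -/
def IsProperEdgeColoring {V : Type*} (G : SimpleGraph V) (c : Sym2 V → ℕ) : Prop :=
  ∀ e₁ ∈ G.edgeSet, ∀ e₂ ∈ G.edgeSet, e₁ ≠ e₂ → (∃ v, v ∈ e₁ ∧ v ∈ e₂) → c e₁ ≠ c e₂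

/-- The palette of a vertex `v`: the set of colors appearing on edges of `G` incident with `v`. -/
def palette {V : Type*} (G : SimpleGraph V) (c : Sym2 V → ℕ) (v : V) : Set ℕ :=
  {n | ∃ e ∈ G.edgeSet, v ∈ e ∧ c e = n}

/-- The palette index of `G`: the minimum number of distinct palettes occurring in a
proper edge coloring of `G`. -/
noncomputable def paletteIndex {V : Type*} (G : SimpleGraph V) : ℕ :=
  sInf {k | ∃ c : Sym2 V → ℕ, IsProperEdgeColoring G c ∧ (Set.range (palette G c)).ncard = k}

/-!
Lower bound: under a proper coloring the palette of `v` has `deg v` colors, and each of them lies in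
the palette of a neighbor of `v`. If all neighbors have degree at most `d < deg v`, then at least
`⌈deg v / d⌉` palettes are needed to cover that of `v`, which is itself yet another palette.

Upper bound: let `g = gcd(a, b)`, `a = k g` and `b = m g`. Index the two sides by `K × ℤ/g` and
`ℤ/m × ℤ/g`, where `K` is a `k`-element subset of `ℤ/m`, and color each edge by the sum of its
endpoints. Every vertex of the small side sees all colors, and the palette of `(y, t)` on the large
side is `(K + y) × ℤ/g`, which depends only on `y`.
-/

section Palette

variable {V : Type*} {G : SimpleGraph V} {c : Sym2 V → ℕ} {v : V}

theorem isProperEdgeColoring_iff_injOn_incidenceSet :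
    IsProperEdgeColoring G c ↔ ∀ v, Set.InjOn c (G.incidenceSet v) := by
  constructor
  · intro hc v e₁ he₁ e₂ he₂ heq
    by_contra hne
    exact hc e₁ he₁.1 e₂ he₂.1 hne ⟨v, he₁.2, he₂.2⟩ heq
  · rintro hc e₁ he₁ e₂ he₂ hne ⟨v, hv₁, hv₂⟩ heq
    exact hne (hc v ⟨he₁, hv₁⟩ ⟨he₂, hv₂⟩ heq)

theorem palette_eq_image_incidenceSet (G : SimpleGraph V) (c : Sym2 V → ℕ) (v : V) :
    palette G c v = c '' G.incidenceSet v := by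
  ext n
  exact exists_congr fun e => and_assoc.symm

theorem IsProperEdgeColoring.ncard_palette [Fintype (G.neighborSet v)]
    (hc : IsProperEdgeColoring G c) : (palette G c v).ncard = G.degree v := by
  classical
  rw [palette_eq_image_incidenceSet,
    (isProperEdgeColoring_iff_injOn_incidenceSet.1 hc v).ncard_image,
    ← Nat.card_coe_set_eq, Nat.card_eq_fintype_card, card_incidenceSet_eq_degree]

theorem finite_palette [Finite (G.neighborSet v)] : (palette G c v).Finite := by
  classical
  have : Finite (G.incidenceSet v) := .of_equiv _ (G.incidenceSetEquivNeighborSet v).symm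
  exact palette_eq_image_incidenceSet G c v ▸ (Set.toFinite (G.incidenceSet v)).image c

theorem exists_adj_mem_palette {n : ℕ} (hn : n ∈ palette G c v) :
    ∃ w, G.Adj v w ∧ n ∈ palette G c w := by
  obtain ⟨e, he, hve, rfl⟩ := hn
  obtain ⟨w, rfl⟩ := Sym2.mem_iff_exists.1 hve
  exact ⟨w, he, s(v, w), he, Sym2.mem_mk_right v w, rfl⟩

theorem exists_isProperEdgeColoring [Countable V] (G : SimpleGraph V) :
    ∃ c, IsProperEdgeColoring G c := by
  have : Countable (Sym2 V) := inferInstanceAs (Countable (Quot _))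
  obtain ⟨c, hc⟩ := exists_injective_nat (Sym2 V)
  exact ⟨c, fun _ _ _ _ hne _ => hc.ne hne⟩

theorem IsProperEdgeColoring.paletteIndex_le (hc : IsProperEdgeColoring G c) :
    paletteIndex G ≤ (Set.range (palette G c)).ncard :=
  Nat.sInf_le ⟨c, hc, rfl⟩

theorem le_paletteIndex [Countable V] {k : ℕ}
    (hk : ∀ c, IsProperEdgeColoring G c → k ≤ (Set.range (palette G c)).ncard) :
    k ≤ paletteIndex G := by
  obtain ⟨c₀, hc₀⟩ := exists_isProperEdgeColoring G
  refine le_csInf ⟨_, c₀, hc₀, rfl⟩ ?_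
  rintro _ ⟨c, hc, rfl⟩
  exact hk c hc

end Palette

section Iso

variable {V V' : Type*} {G : SimpleGraph V} {G' : SimpleGraph V'}

theorem image_map_incidenceSet (e : G ≃g G') (v : V) :
    Sym2.map e '' G.incidenceSet v = G'.incidenceSet (e v) := by
  ext p
  obtain ⟨q, rfl⟩ : ∃ q, Sym2.map e q = p := ⟨Sym2.map e.symm p, by simp [Sym2.map_map]⟩
  rw [(Sym2.map.injective e.injective).mem_set_image]
  simp [incidenceSet, e.map_mem_edgeSet_iff, Sym2.mem_map]

theorem palette_comp_map (e : G ≃g G') (c : Sym2 V' → ℕ) (v : V) :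
    palette G (c ∘ Sym2.map e) v = palette G' c (e v) := by
  rw [palette_eq_image_incidenceSet, palette_eq_image_incidenceSet, Set.image_comp,
    image_map_incidenceSet]

theorem isProperEdgeColoring_comp_map_iff (e : G ≃g G') {c : Sym2 V' → ℕ} :
    IsProperEdgeColoring G (c ∘ Sym2.map e) ↔ IsProperEdgeColoring G' c := by
  simp only [isProperEdgeColoring_iff_injOn_incidenceSet, e.surjective.forall,
    (Sym2.map.injective e.injective).injOn.comp_iff, image_map_incidenceSet]

theorem range_palette_comp_map (e : G ≃g G') (c : Sym2 V' → ℕ) :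
    Set.range (palette G (c ∘ Sym2.map e)) = Set.range (palette G' c) := by
  rw [← e.surjective.range_comp]
  exact congrArg Set.range (funext (palette_comp_map e c))

theorem paletteIndex_congr (e : G ≃g G') : paletteIndex G = paletteIndex G' := by
  have hsurj : Function.Surjective fun c : Sym2 V' → ℕ => c ∘ Sym2.map e :=
    (Sym2.map.injective e.injective).surjective_comp_right
  simp only [paletteIndex, hsurj.exists, isProperEdgeColoring_comp_map_iff, range_palette_comp_map]

end Iso

section LowerBound

theorem ncard_sUnion_le_ncard_mul {α : Type*} {F : Set (Set α)} (hF : F.Finite) {d : ℕ}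
    (hd : ∀ s ∈ F, s.ncard ≤ d) : (⋃₀ F).ncard ≤ F.ncard * d := by
  lift F to Finset (Set α) using hF
  rw [Set.sUnion_eq_biUnion, Set.ncard_coe_finset]
  exact (F.set_ncard_biUnion_le id).trans (F.sum_le_card_nsmul _ d hd)

variable {V : Type*} {G : SimpleGraph V} [G.LocallyFinite] {v : V} {d : ℕ}

theorem IsProperEdgeColoring.degree_le_ncard_image_palette_mul {c : Sym2 V → ℕ}
    (hc : IsProperEdgeColoring G c) (hd : ∀ w, G.Adj v w → G.degree w ≤ d) :
    G.degree v ≤ (palette G c '' G.neighborSet v).ncard * d := by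
  have hcard : ∀ s ∈ palette G c '' G.neighborSet v, s.ncard ≤ d := by
    rintro _ ⟨w, hvw, rfl⟩
    exact hc.ncard_palette.trans_le (hd w hvw)
  have hcover : palette G c v ⊆ ⋃₀ (palette G c '' G.neighborSet v) := fun n hn =>
    let ⟨w, hvw, hnw⟩ := exists_adj_mem_palette hn
    ⟨_, Set.mem_image_of_mem _ hvw, hnw⟩
  have hfinite : (⋃₀ (palette G c '' G.neighborSet v)).Finite := by
    refine ((Set.toFinite (G.neighborSet v)).image _).sUnion ?_
    rintro _ ⟨w, -, rfl⟩
    exact finite_palette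
  calc G.degree v = (palette G c v).ncard := hc.ncard_palette.symm
    _ ≤ (⋃₀ (palette G c '' G.neighborSet v)).ncard := Set.ncard_le_ncard hcover hfinite
    _ ≤ (palette G c '' G.neighborSet v).ncard * d :=
      ncard_sUnion_le_ncard_mul ((Set.toFinite (G.neighborSet v)).image _) hcard

theorem one_add_degree_ceilDiv_le_paletteIndex [Finite V]
    (hd : ∀ w, G.Adj v w → G.degree w ≤ d) (hv : d < G.degree v) :
    1 + G.degree v ⌈/⌉ d ≤ paletteIndex G := by
  refine le_paletteIndex fun c hc => ?_
  have hle := hc.degree_le_ncard_image_palette_mul hd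
  have hdpos : 0 < d := Nat.pos_of_mul_pos_left ((Nat.zero_le d).trans_lt (hv.trans_le hle))
  have hnotMem : palette G c v ∉ palette G c '' G.neighborSet v := by
    rintro ⟨w, hvw, hpalette⟩
    have hdegree : G.degree w = G.degree v := by
      rw [← hc.ncard_palette, hpalette, hc.ncard_palette]
    exact (hd w hvw).not_gt (hdegree ▸ hv)
  calc 1 + G.degree v ⌈/⌉ d
      ≤ (palette G c '' G.neighborSet v).ncard + 1 := by
        rw [add_comm]
        exact Nat.add_le_add_right ((ceilDiv_le_iff_le_mul hdpos).2 (mul_comm d _ ▸ hle)) 1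
    _ = (insert (palette G c v) (palette G c '' G.neighborSet v)).ncard :=
        (Set.ncard_insert_of_notMem hnotMem).symm
    _ ≤ (Set.range (palette G c)).ncard :=
        Set.ncard_le_ncard (Set.insert_subset ⟨v, rfl⟩ (Set.image_subset_range _ _))

end LowerBound

section CompleteBipartite

variable {V W : Type*}

theorem degree_completeBipartiteGraph_inl [Fintype W] (v : V)
    [Fintype ((completeBipartiteGraph V W).neighborSet (Sum.inl v))] :
    (completeBipartiteGraph V W).degree (Sum.inl v) = Fintype.card W := by
  have hnbrs : (completeBipartiteGraph V W).neighborSet (Sum.inl v) = Set.range Sum.inr := by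
    ext (x | x) <;> simp
  rw [← card_neighborSet_eq_degree, ← Nat.card_eq_fintype_card, hnbrs,
    Nat.card_range_of_injective Sum.inr_injective, Nat.card_eq_fintype_card]

theorem degree_completeBipartiteGraph_inr [Fintype V] (w : W)
    [Fintype ((completeBipartiteGraph V W).neighborSet (Sum.inr w))] :
    (completeBipartiteGraph V W).degree (Sum.inr w) = Fintype.card V := by
  have hnbrs : (completeBipartiteGraph V W).neighborSet (Sum.inr w) = Set.range Sum.inl := by
    ext (x | x) <;> simp
  rw [← card_neighborSet_eq_degree, ← Nat.card_eq_fintype_card, hnbrs,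
    Nat.card_range_of_injective Sum.inl_injective, Nat.card_eq_fintype_card]

theorem one_add_card_ceilDiv_card_le_paletteIndex_completeBipartiteGraph
    [Fintype V] [Fintype W] [Nonempty V] (hVW : Fintype.card V < Fintype.card W) :
    1 + Fintype.card W ⌈/⌉ Fintype.card V ≤ paletteIndex (completeBipartiteGraph V W) := by
  classical
  obtain ⟨v⟩ := ‹Nonempty V›
  rw [← degree_completeBipartiteGraph_inl (W := W) v] at hVW ⊢
  refine one_add_degree_ceilDiv_le_paletteIndex ?_ hVW
  rintro (x | w) hadj
  · simp at hadj
  · exact (degree_completeBipartiteGraph_inr w).le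

/-- The edge coloring of the complete bipartite graph on `V` and `W` given by a `V × W` array of
colors; the pairs that are not edges get the junk color `0`. -/
def arrayColoring (f : V → W → ℕ) : Sym2 (V ⊕ W) → ℕ :=
  Sym2.lift ⟨fun
    | Sum.inl v, Sum.inr w => f v w
    | Sum.inr w, Sum.inl v => f v w
    | _, _ => 0, by rintro (_ | _) (_ | _) <;> rfl⟩

theorem incidenceSet_completeBipartiteGraph_inl (v : V) :
    (completeBipartiteGraph V W).incidenceSet (Sum.inl v) =
      Set.range fun w => s(Sum.inl v, Sum.inr w) := by
  ext e
  induction e with | _ x y => rcases x with x | x <;> rcases y with y | y <;>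
    simp [mk'_mem_incidenceSet_iff, eq_comm]

theorem incidenceSet_completeBipartiteGraph_inr (w : W) :
    (completeBipartiteGraph V W).incidenceSet (Sum.inr w) =
      Set.range fun v => s(Sum.inl v, Sum.inr w) := by
  ext e
  induction e with | _ x y => rcases x with x | x <;> rcases y with y | y <;>
    simp [mk'_mem_incidenceSet_iff, eq_comm]

theorem palette_arrayColoring_inl (f : V → W → ℕ) (v : V) :
    palette (completeBipartiteGraph V W) (arrayColoring f) (Sum.inl v) = Set.range (f v) := by
  rw [palette_eq_image_incidenceSet, incidenceSet_completeBipartiteGraph_inl, ← Set.range_comp]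
  rfl

theorem palette_arrayColoring_inr (f : V → W → ℕ) (w : W) :
    palette (completeBipartiteGraph V W) (arrayColoring f) (Sum.inr w) =
      Set.range fun v => f v w := by
  rw [palette_eq_image_incidenceSet, incidenceSet_completeBipartiteGraph_inr, ← Set.range_comp]
  rfl

theorem isProperEdgeColoring_arrayColoring {f : V → W → ℕ}
    (hrow : ∀ v, Function.Injective (f v)) (hcol : ∀ w, Function.Injective fun v => f v w) :
    IsProperEdgeColoring (completeBipartiteGraph V W) (arrayColoring f) := by
  rw [isProperEdgeColoring_iff_injOn_incidenceSet]
  rintro (v | w)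
  · rw [incidenceSet_completeBipartiteGraph_inl]
    exact Function.Injective.injOn_range (hrow v)
  · rw [incidenceSet_completeBipartiteGraph_inr]
    exact Function.Injective.injOn_range (hcol w)

theorem paletteIndex_completeBipartiteGraph_le_of_array {C : Type*} [Countable C] {f : V → W → C}
    (hrow : ∀ v, Function.Injective (f v)) (hcol : ∀ w, Function.Injective fun v => f v w) :
    paletteIndex (completeBipartiteGraph V W) ≤
      (Set.range fun v => Set.range (f v)).ncard +
        (Set.range fun w => Set.range fun v => f v w).ncard := by
  obtain ⟨code, hcode⟩ := exists_injective_nat C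
  have hproper := isProperEdgeColoring_arrayColoring (f := fun v w => code (f v w))
    (fun v => hcode.comp (hrow v)) (fun w => hcode.comp (hcol w))
  have hrange : Set.range (palette (completeBipartiteGraph V W)
      (arrayColoring fun v w => code (f v w))) =
      Set.image code '' ((Set.range fun v => Set.range (f v)) ∪
        Set.range fun w => Set.range fun v => f v w) := by
    rw [← Set.Sum.elim_range, ← Set.range_comp]
    congr 1
    funext x
    rcases x with v | w
    · exact (palette_arrayColoring_inl _ v).trans (Set.range_comp code (f v))
    · exact (palette_arrayColoring_inr _ w).trans (Set.range_comp code fun v => f v w)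
  have hle := hproper.paletteIndex_le
  rw [hrange, Set.ncard_image_of_injective _ hcode.image_injective] at hle
  exact hle.trans (Set.ncard_union_le _ _)

theorem paletteIndex_completeBipartiteGraph_prod_le {K M H : Type*} [AddGroup M] [Finite M]
    [AddGroup H] [Countable H] (ι : K ↪ M) :
    paletteIndex (completeBipartiteGraph (K × H) (M × H)) ≤ 1 + Nat.card M := by
  let f : K × H → M × H → M × H := fun p q => (ι p.1, p.2) + q
  have hrow : ∀ p, Function.Bijective (f p) := fun p => AddGroup.addLeft_bijective (ι p.1, p.2)
  have hcol : ∀ q, Function.Injective fun p => f p q := fun q =>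
    (add_left_injective q).comp (ι.injective.prodMap Function.injective_id)
  let colPalette (y : M) : Set (M × H) := (Set.range fun x => ι x + y) ×ˢ Set.univ
  have hcolPalette : ∀ q : M × H, (Set.range fun p => f p q) = colPalette q.1 := by
    rintro ⟨y, t⟩
    have hsurj : Set.range (· + t) = Set.univ := (AddGroup.addRight_bijective t).surjective.range_eq
    simp only [colPalette, ← hsurj, ← Set.range_prodMap]
    rfl
  have hcolPalettes : (Set.range fun q => Set.range fun p => f p q) = Set.range colPalette := by
    rw [← (Prod.fst_surjective (β := H)).range_comp colPalette]
    exact congrArg Set.range (funext hcolPalette)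
  refine (paletteIndex_completeBipartiteGraph_le_of_array (fun p => (hrow p).injective) hcol).trans
    (Nat.add_le_add ?_ ?_)
  · simp only [(hrow _).surjective.range_eq]
    exact (Set.ncard_le_ncard Set.range_const_subset).trans (Set.ncard_singleton _).le
  · exact (congrArg Set.ncard hcolPalettes).trans_le (Finite.card_range_le colPalette)

theorem paletteIndex_completeBipartiteGraph_fin_mul_le {k m : ℕ} (g : ℕ) [NeZero m] [NeZero g]
    (hkm : k ≤ m) :
    paletteIndex (completeBipartiteGraph (Fin (k * g)) (Fin (m * g))) ≤ 1 + m :=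
  calc paletteIndex (completeBipartiteGraph (Fin (k * g)) (Fin (m * g)))
      = paletteIndex (completeBipartiteGraph (Fin k × Fin g) (Fin m × Fin g)) :=
        paletteIndex_congr
          (completeBipartiteGraphCongr finProdFinEquiv.symm finProdFinEquiv.symm)
    _ ≤ 1 + Nat.card (Fin m) := paletteIndex_completeBipartiteGraph_prod_le (Fin.castLEEmb hkm)
    _ = 1 + m := by rw [Nat.card_fin]

theorem paletteIndex_completeBipartiteGraph_fin_le {a b : ℕ} (hb : 0 < b) (hab : a ≤ b) :
    paletteIndex (completeBipartiteGraph (Fin a) (Fin b)) ≤ 1 + b / Nat.gcd a b := by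
  have hg : 0 < Nat.gcd a b := Nat.gcd_pos_of_pos_right a hb
  have : NeZero (Nat.gcd a b) := ⟨hg.ne'⟩
  have : NeZero (b / Nat.gcd a b) := ⟨(Nat.div_pos (Nat.gcd_le_right a hb) hg).ne'⟩
  have hle := paletteIndex_completeBipartiteGraph_fin_mul_le (Nat.gcd a b)
    (Nat.div_le_div_right hab : a / Nat.gcd a b ≤ b / Nat.gcd a b)
  rwa [Nat.div_mul_cancel (Nat.gcd_dvd_left a b), Nat.div_mul_cancel (Nat.gcd_dvd_right a b)] at hle

end CompleteBipartite

/-- For `0 < a < b`, `1 + ⌈b/a⌉ ≤ š(K_{a,b}) ≤ 1 + b / gcd(a,b)`. -/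
theorem palette_index_completeBipartite (a b : ℕ) (ha : 0 < a) (hab : a < b) :
    1 + (b + a - 1) / a ≤ paletteIndex (completeBipartiteGraph (Fin a) (Fin b)) ∧
      paletteIndex (completeBipartiteGraph (Fin a) (Fin b)) ≤ 1 + b / Nat.gcd a b := by
  have : NeZero a := ⟨ha.ne'⟩
  constructor
  · have hlower := one_add_card_ceilDiv_card_le_paletteIndex_completeBipartiteGraph
      (V := Fin a) (W := Fin b) (by simpa only [Fintype.card_fin] using hab)
    rwa [Fintype.card_fin, Fintype.card_fin, Nat.ceilDiv_eq_add_pred_div] at hlower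
  · exact paletteIndex_completeBipartiteGraph_fin_le (ha.trans hab) hab.le
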